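/- Let Ω ⊆ ℂⁿ be a bounded, convex, balanced domain and D ⊆ ℂⁿ a bounded domain. If the generalized squeezing function S_D^Ω satisfies S_D^Ω(z) = 1 at some point z ∈ D (witnessed by an extremal injective holomorphic map f : D → Ω with f(z) = 0 and Ω(S_D^Ω(z)) ⊆ f(D)), then f is a biholomorphism of D onto Ω. -/

import Mathlib

open Bornology

/-- The Minkowski function of a set `Ω` in a complex vector space. -/
noncomputable def mink {E : Type*} [SMul ℂ E] (Ω : Set E) (z : E) : ℝ :=
  sInf {t : ℝ | 0 < t ∧ (t : ℂ)⁻¹ • z ∈ Ω}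

/-- `Ω` is balanced: `λ • z ∈ Ω` whenever `z ∈ Ω` and `‖λ‖ ≤ 1`. -/
def Bal {E : Type*} [SMul ℂ E] (Ω : Set E) : Prop :=
  ∀ z ∈ Ω, ∀ l : ℂ, ‖l‖ ≤ 1 → l • z ∈ Ω

/-- The sublevel set `Ω(r) = {z : h_Ω(z) < r}`. -/
def sub' {E : Type*} [SMul ℂ E] (Ω : Set E) (r : ℝ) : Set E := {z | mink Ω z < r}

/-- The generalized squeezing function `S_D^Ω(z)` for bounded domains `D, Ω`. -/
noncomputable def gsq {E : Type*} [NormedAddCommGroup E] [NormedSpace ℂ E]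
    (D Ω : Set E) (z : E) : ℝ :=
  sSup {r : ℝ | ∃ f : E → E, DifferentiableOn ℂ f D ∧ Set.InjOn f D ∧
    Set.MapsTo f D Ω ∧ f z = 0 ∧ sub' Ω r ⊆ f '' D}

open Filter Metric Set Topology

/-!
If `S_D^Ω(z) = 1`, then `Ω = Ω(1) ⊆ f(D)`, so `f` is onto `Ω` and only the holomorphy of its inverse
is at stake. This is Osgood's theorem: an injective holomorphic map between spaces of the same
dimension `n` has injective derivatives.

The proof is by induction on `n`. If `φ ∘ f'(a) ≠ 0` for a functional `φ`, then `f` maps the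
hypersurface `φ ∘ f = φ (f a)` injectively into a translate of `ker φ`, and the case `n - 1` shows
that `f'(a)` is injective. Hence each `f'(a)` is zero or injective, and the Jacobian determinant
vanishes exactly where `f'` does. For `n ≥ 2`, if its zero set were nonempty, it would either have
interior points or contain a piece of a smooth hypersurface; `f` would be constant there,
contradicting injectivity. For `n = 1`, the inverse is continuous by the open mapping theorem and
holomorphic off a discrete set, hence holomorphic by Riemann's removable singularity theorem.
-/

section HolomorphicRegularity

variable {E F : Type*} [NormedAddCommGroup E] [NormedSpace ℂ E]
  [NormedAddCommGroup F] [NormedSpace ℂ F] {U : Set E} {f : E → F}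

theorem norm_fderiv_le_of_forall_mem_ball_norm_le {c : E} {r C : ℝ} (hr : 0 < r)
    (hf : DifferentiableOn ℂ f (ball c r)) (hC : ∀ y ∈ ball c r, ‖f y‖ ≤ C) :
    ‖fderiv ℂ f c‖ ≤ 2 * C / r := by
  refine Complex.norm_fderiv_le_div_of_mapsTo_ball hf (fun y hy => ?_) hr
  rw [mem_closedBall_iff_norm]
  linarith [norm_sub_le (f y) (f c), hC y hy, hC c (mem_ball_self hr)]

theorem continuousOn_fderiv_of_differentiableOn (hU : IsOpen U) (hf : DifferentiableOn ℂ f U) :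
    ContinuousOn (fderiv ℂ f) U := by
  intro a ha
  refine ContinuousAt.continuousWithinAt (Metric.continuousAt_iff'.2 fun ε hε => ?_)
  have hfa := (hf.differentiableAt (hU.mem_nhds ha)).hasFDerivAt
  obtain ⟨r, hr, hball⟩ := Metric.mem_nhds_iff.1
    ((hfa.isLittleO.bound (show 0 < ε / 8 by positivity)).and (hU.mem_nhds ha))
  -- The Cauchy estimate applied to the remainder of `f` at `a`, which is `O(ε r)` on `ball a r`.
  let ρ : E → F := fun y => f y - fderiv ℂ f a (y - a) - f a
  have hρ : ∀ y ∈ ball a r, HasFDerivAt ρ (fderiv ℂ f y - fderiv ℂ f a) y := fun y hy =>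
    ((hf.differentiableAt (hU.mem_nhds (hball hy).2)).hasFDerivAt.sub
      ((fderiv ℂ f a).hasFDerivAt.comp y ((hasFDerivAt_id y).sub_const a))).sub_const (f a)
  have hρ_le : ∀ y ∈ ball a r, ‖ρ y‖ ≤ ε / 8 * r := fun y hy => by
    have hy' : ‖y - a‖ ≤ r := (mem_ball_iff_norm.1 hy).le
    calc ‖ρ y‖ = ‖f y - f a - fderiv ℂ f a (y - a)‖ := by simp only [ρ, sub_right_comm]
      _ ≤ ε / 8 * ‖y - a‖ := (hball hy).1
      _ ≤ ε / 8 * r := by gcongr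
  filter_upwards [ball_mem_nhds a (half_pos hr)] with x hx
  have hsub : ball x (r / 2) ⊆ ball a r :=
    ball_subset_ball' (by linarith [mem_ball.1 hx])
  calc dist (fderiv ℂ f x) (fderiv ℂ f a) = ‖fderiv ℂ ρ x‖ := by
        rw [dist_eq_norm, (hρ x (hsub (mem_ball_self (half_pos hr)))).fderiv]
    _ ≤ 2 * (ε / 8 * r) / (r / 2) :=
        norm_fderiv_le_of_forall_mem_ball_norm_le (half_pos hr)
          (fun y hy => (hρ y (hsub hy)).differentiableAt.differentiableWithinAt)
          fun y hy => hρ_le y (hsub hy)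
    _ = ε / 2 := by field_simp; norm_num
    _ < ε := half_lt_self hε

theorem contDiffAt_one_of_differentiableOn (hU : IsOpen U) (hf : DifferentiableOn ℂ f U) {a : E}
    (ha : a ∈ U) : ContDiffAt ℂ 1 f a :=
  contDiffAt_one_iff.2 ⟨fderiv ℂ f, U, hU.mem_nhds ha,
    continuousOn_fderiv_of_differentiableOn hU hf,
    fun _ hx => (hf.differentiableAt (hU.mem_nhds hx)).hasFDerivAt⟩

theorem hasStrictFDerivAt_of_differentiableOn (hU : IsOpen U) (hf : DifferentiableOn ℂ f U)
    {a : E} (ha : a ∈ U) : HasStrictFDerivAt f (fderiv ℂ f a) a :=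
  (contDiffAt_one_of_differentiableOn hU hf ha).hasStrictFDerivAt one_ne_zero

theorem uniformCauchySeqOn_fderiv {ι : Type*} {l : Filter ι} {g : ι → E → F} {c : E} {r : ℝ}
    (hr : 0 < r) (hg : UniformCauchySeqOn g l (ball c (2 * r)))
    (hd : ∀ᶠ i in l, DifferentiableOn ℂ (g i) (ball c (2 * r))) :
    UniformCauchySeqOn (fun i => fderiv ℂ (g i)) l (ball c r) := by
  intro u hu
  obtain ⟨ε, hε, hεu⟩ := Metric.mem_uniformity_dist.1 hu
  have hδ : {p : F × F | dist p.1 p.2 < ε * r / 4} ∈ uniformity F :=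
    Metric.dist_mem_uniformity (by positivity)
  filter_upwards [hg _ hδ, hd.prod_mk hd] with ⟨i, j⟩ hij hdij x hx
  have hsub : ball x r ⊆ ball c (2 * r) := ball_subset_ball' (by linarith [mem_ball.1 hx])
  have hmem : ball c (2 * r) ∈ 𝓝 x := isOpen_ball.mem_nhds (hsub (mem_ball_self hr))
  apply hεu
  calc dist (fderiv ℂ (g i) x) (fderiv ℂ (g j) x)
      = ‖fderiv ℂ (fun y => g i y - g j y) x‖ := by
        rw [dist_eq_norm, fderiv_fun_sub (hdij.1.differentiableAt hmem)
          (hdij.2.differentiableAt hmem)]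
    _ ≤ 2 * (ε * r / 4) / r :=
        norm_fderiv_le_of_forall_mem_ball_norm_le hr ((hdij.1.sub hdij.2).mono hsub)
          fun y hy => by simpa only [dist_eq_norm] using (hij y (hsub hy)).le
    _ = ε / 2 := by field_simp; norm_num
    _ < ε := half_lt_self hε

theorem differentiableOn_of_tendstoLocallyUniformlyOn [LocallyCompactSpace E] [CompleteSpace F]
    {ι : Type*} {l : Filter ι} [l.NeBot] {g : ι → E → F} (hU : IsOpen U)
    (hgf : TendstoLocallyUniformlyOn g f l U) (hg : ∀ᶠ i in l, DifferentiableOn ℂ (g i) U) :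
    DifferentiableOn ℂ f U := by
  intro a ha
  obtain ⟨K, hKa, hKU, hK⟩ := local_compact_nhds (hU.mem_nhds ha)
  obtain ⟨R, hR, hRK⟩ := Metric.mem_nhds_iff.1 hKa
  obtain ⟨r, rfl⟩ : ∃ r, R = 2 * r := ⟨R / 2, by ring⟩
  have hr : 0 < r := by linarith
  have hunif : TendstoUniformlyOn g f l (ball a (2 * r)) :=
    ((tendstoLocallyUniformlyOn_iff_forall_isCompact hU).1 hgf K hKU hK).mono hRK
  have hdiff : ∀ᶠ i in l, DifferentiableOn ℂ (g i) (ball a (2 * r)) :=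
    hg.mono fun i hi => hi.mono (hRK.trans hKU)
  have hcauchy := uniformCauchySeqOn_fderiv hr hunif.uniformCauchySeqOn hdiff
  have hlim : ∀ y ∈ ball a r, ∃ L, Tendsto (fun i => fderiv ℂ (g i) y) l (𝓝 L) := fun y hy =>
    cauchy_iff_exists_le_nhds.1 (hcauchy.cauchy_map hy)
  choose! f' hf' using hlim
  have hball : ball a r ∈ 𝓝 a := ball_mem_nhds a hr
  have hsub : ball a r ⊆ ball a (2 * r) := ball_subset_ball (by linarith)
  refine (hasFDerivAt_of_tendstoUniformlyOnFilter (f := g) (g' := f') (l := l)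
    ((hcauchy.tendstoUniformlyOn_of_tendsto hf').tendstoUniformlyOnFilter.mono_right
      (le_principal_iff.2 hball)) ?_ ?_).differentiableAt.differentiableWithinAt
  · filter_upwards [hdiff.prod_mk hball] with p hp
    exact (hp.1.differentiableAt (isOpen_ball.mem_nhds (hsub hp.2))).hasFDerivAt
  · filter_upwards [hball] with y hy using hunif.tendsto_at (hsub hy)

theorem tendsto_differenceQuotient_of_hasStrictFDerivAt {𝕜 : Type*} [NontriviallyNormedField 𝕜]
    {E F : Type*} [NormedAddCommGroup E] [NormedSpace 𝕜 E] [NormedAddCommGroup F]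
    [NormedSpace 𝕜 F] {f : E → F} {f' : E →L[𝕜] F} {a : E} (hf : HasStrictFDerivAt f f' a)
    (v : E) :
    Tendsto (fun p : 𝕜 × E => p.1⁻¹ • (f (p.2 + p.1 • v) - f p.2)) (𝓝[≠] 0 ×ˢ 𝓝 a)
      (𝓝 (f' v)) := by
  have hle : 𝓝[≠] (0 : 𝕜) ×ˢ 𝓝 a ≤ 𝓝 (0, a) := by
    rw [nhds_prod_eq]
    exact prod_mono nhdsWithin_le_nhds le_rfl
  have hpair : Tendsto (fun p : 𝕜 × E => (p.2 + p.1 • v, p.2)) (𝓝[≠] 0 ×ˢ 𝓝 a) (𝓝 (a, a)) := by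
    refine Tendsto.mono_left (Continuous.tendsto' (by fun_prop) _ _ (by simp)) hle
  have hO : (fun p : 𝕜 × E => p.2 + p.1 • v - p.2) =O[𝓝[≠] 0 ×ˢ 𝓝 a] Prod.fst :=
    Asymptotics.IsBigO.of_bound ‖v‖ (Eventually.of_forall fun p => by
      simp [norm_smul, mul_comm])
  have hzero := ((hf.isLittleO.comp_tendsto hpair).trans_isBigO hO).tendsto_inv_smul_nhds_zero
  rw [← tendsto_sub_nhds_zero_iff]
  refine hzero.congr' ?_
  filter_upwards [(eventually_mem_nhdsWithin (a := (0 : 𝕜)) (s := {0}ᶜ)).prod_inl (𝓝 a)] with p hp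
  simp [smul_sub, inv_smul_smul₀ (show p.1 ≠ 0 from hp)]

theorem differentiableOn_fderiv_apply [LocallyCompactSpace E] [CompleteSpace F] (hU : IsOpen U)
    (hf : DifferentiableOn ℂ f U) (v : E) : DifferentiableOn ℂ (fun x => fderiv ℂ f x v) U := by
  intro a ha
  obtain ⟨R, hR, hRU⟩ := Metric.isOpen_iff.1 hU a ha
  obtain ⟨r, rfl⟩ : ∃ r, R = 2 * r := ⟨R / 2, by ring⟩
  have hr : 0 < r := by linarith
  have hsub : ball a r ⊆ U := (ball_subset_ball (by linarith)).trans hRU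
  refine ((differentiableOn_of_tendstoLocallyUniformlyOn isOpen_ball (l := 𝓝[≠] (0 : ℂ))
    (g := fun t x => t⁻¹ • (f (x + t • v) - f x)) ?_ ?_).differentiableAt
      (ball_mem_nhds a hr)).differentiableWithinAt
  · rw [isOpen_ball.tendstoLocallyUniformlyOn_iff_forall_tendsto]
    intro x hx
    have hcont : ContinuousAt (fun y => fderiv ℂ f y v) x :=
      ((continuousOn_fderiv_of_differentiableOn hU hf).continuousAt
        (hU.mem_nhds (hsub hx))).clm_apply continuousAt_const
    exact ((hcont.tendsto.comp tendsto_snd).prodMk_nhds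
      (tendsto_differenceQuotient_of_hasStrictFDerivAt
        (hasStrictFDerivAt_of_differentiableOn hU hf (hsub hx)) v)).mono_right
          (nhds_le_uniformity _)
  · have hsmall : ∀ᶠ t : ℂ in 𝓝[≠] 0, ‖t • v‖ < r :=
      nhdsWithin_le_nhds (ContinuousAt.eventually_lt (by fun_prop) continuousAt_const
        (by simpa using hr))
    filter_upwards [hsmall] with t ht x hx
    have hmem : x + t • v ∈ U := hRU <| by
      rw [mem_ball_iff_norm] at hx ⊢
      calc ‖x + t • v - a‖ = ‖(x - a) + t • v‖ := by rw [add_sub_right_comm]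
        _ ≤ ‖x - a‖ + ‖t • v‖ := norm_add_le _ _
        _ < 2 * r := by linarith
    have hshift : DifferentiableAt ℂ (fun y => f (y + t • v)) x :=
      (hf.differentiableAt (hU.mem_nhds hmem)).comp x (differentiableAt_id.add_const _)
    exact ((hshift.sub (hf.differentiableAt (hU.mem_nhds (hsub hx)))).const_smul
      t⁻¹).differentiableWithinAt

end HolomorphicRegularity

section VanishingDerivative

variable {𝕜 E F : Type*} [RCLike 𝕜] [NormedAddCommGroup E] [NormedSpace 𝕜 E]
  [NormedAddCommGroup F] [NormedSpace 𝕜 F] {f : E → F} {a : E}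

theorem eventually_eq_of_eventually_hasFDerivAt_zero
    (h : ∀ᶠ x in 𝓝 a, HasFDerivAt f (0 : E →L[𝕜] F) x) : ∀ᶠ x in 𝓝 a, f x = f a := by
  obtain ⟨r, hr, hball⟩ := Metric.mem_nhds_iff.1 h
  let : NormedSpace ℝ E := NormedSpace.restrictScalars ℝ 𝕜 E
  filter_upwards [ball_mem_nhds a hr] with x hx
  exact isOpen_ball.is_const_of_fderiv_eq_zero (convex_ball a r).isPreconnected
    (fun y hy => (hball hy).differentiableAt.differentiableWithinAt)
    (fun y hy => (hball hy).fderiv) hx (mem_ball_self hr)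

theorem not_injOn_of_eventually_hasFDerivAt_zero [Nontrivial E] {s : Set E} (hs : s ∈ 𝓝 a)
    (h : ∀ᶠ x in 𝓝 a, HasFDerivAt f (0 : E →L[𝕜] F) x) : ¬InjOn f s := by
  intro hinj
  have := Module.punctured_nhds_neBot 𝕜 E a
  obtain ⟨x, ⟨hxa, hxs⟩, hne⟩ := (((eventually_eq_of_eventually_hasFDerivAt_zero h).and
    hs).filter_mono nhdsWithin_le_nhds |>.and (self_mem_nhdsWithin (s := {a}ᶜ))).exists
  exact hne (hinj hxs (mem_of_mem_nhds hs) hxa)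

end VanishingDerivative

section OneVariable

theorem nhds_le_map_nhds_of_injOn {f : ℂ → ℂ} {V : Set ℂ} {a : ℂ} (hV : V ∈ 𝓝 a)
    (hf : AnalyticAt ℂ f a) (hinj : InjOn f V) : 𝓝 (f a) ≤ map f (𝓝 a) := by
  refine hf.eventually_constant_or_nhds_le_map_nhds.resolve_left fun hconst => ?_
  obtain ⟨x, ⟨hxa, hxV⟩, hne⟩ := ((hconst.and hV).filter_mono nhdsWithin_le_nhds |>.and
    (self_mem_nhdsWithin (s := {a}ᶜ))).exists
  exact hne (hinj hxV (mem_of_mem_nhds hV) hxa)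

theorem deriv_ne_zero_of_injOn {f : ℂ → ℂ} {V : Set ℂ} {a : ℂ} (hV : IsOpen V)
    (hf : DifferentiableOn ℂ f V) (hinj : InjOn f V) (ha : a ∈ V) : deriv f a ≠ 0 := by
  intro hfa
  have hVa : V ∈ 𝓝 a := hV.mem_nhds ha
  have hana : ∀ x ∈ V, AnalyticAt ℂ f x := hf.analyticOnNhd hV
  have hderiv : ∀ᶠ x in 𝓝[≠] a, deriv f x ≠ 0 := by
    refine (hana a ha).deriv.eventually_eq_zero_or_eventually_ne_zero.resolve_left fun h0 => ?_
    refine not_injOn_of_eventually_hasFDerivAt_zero (𝕜 := ℂ) hVa ?_ hinj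
    filter_upwards [h0, hVa] with x hx hxV
    simpa [hx] using (hana x hxV).differentiableAt.hasDerivAt.hasFDerivAt
  set g := Function.invFunOn f V
  have hleft : ∀ x ∈ V, g (f x) = x := fun x hx => hinj.leftInvOn_invFunOn hx
  have hopen : 𝓝 (f a) ≤ map f (𝓝 a) := nhds_le_map_nhds_of_injOn hVa (hana a ha) hinj
  have hg_cont : ContinuousAt g (f a) := by
    rw [ContinuousAt, hleft a ha]
    refine Tendsto.mono_left (tendsto_map'_iff.2 (tendsto_id.congr' ?_)) hopen
    filter_upwards [hVa] with x hx using (hleft x hx).symm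
  have hg_diff : ∀ᶠ w in 𝓝[≠] f a, DifferentiableAt ℂ g w := by
    refine eventually_nhdsWithin_iff.2 (hopen (eventually_map.2 ?_))
    filter_upwards [eventually_nhdsWithin_iff.1 hderiv, hVa] with x hx hxV hne
    exact ((hana x hxV).hasStrictDerivAt.to_local_left_inverse (hx (ne_of_apply_ne f hne))
      (eventually_of_mem (hV.mem_nhds hxV) hleft)).hasDerivAt.differentiableAt
  have hgf : HasDerivAt (g ∘ f) (deriv g (f a) * deriv f a) a :=
    (Complex.analyticAt_of_differentiable_on_punctured_nhds_of_continuousAt hg_diff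
      hg_cont).differentiableAt.hasDerivAt.comp a (hana a ha).differentiableAt.hasDerivAt
  have hid : HasDerivAt (g ∘ f) 1 a :=
    (hasDerivAt_id a).congr_of_eventuallyEq (eventually_of_mem hVa hleft)
  simpa [hfa] using hgf.unique hid

theorem fderiv_ne_zero_of_injOn_of_finrank_eq_one {E F : Type*} [NormedAddCommGroup E]
    [NormedSpace ℂ E] [NormedAddCommGroup F] [NormedSpace ℂ F] (hE : Module.finrank ℂ E = 1)
    (hF : Module.finrank ℂ F = 1) {U : Set E} {f : E → F} (hU : IsOpen U)
    (hf : DifferentiableOn ℂ f U) (hinj : InjOn f U) {a : E} (ha : a ∈ U) :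
    fderiv ℂ f a ≠ 0 := by
  intro hfa
  have := FiniteDimensional.of_finrank_pos (hE ▸ one_pos)
  have := FiniteDimensional.of_finrank_pos (hF ▸ one_pos)
  let e : ℂ ≃L[ℂ] E := ContinuousLinearEquiv.ofFinrankEq (by rw [hE, Module.finrank_self])
  let e' : F ≃L[ℂ] ℂ := ContinuousLinearEquiv.ofFinrankEq (by rw [hF, Module.finrank_self])
  obtain ⟨t, rfl⟩ := e.surjective a
  have hfe : HasFDerivAt f (0 : E →L[ℂ] F) (e t) :=
    hfa ▸ (hf.differentiableAt (hU.mem_nhds ha)).hasFDerivAt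
  refine deriv_ne_zero_of_injOn (f := e' ∘ f ∘ e) (V := e ⁻¹' U) (hU.preimage e.continuous)
    (e'.differentiable.comp_differentiableOn
      (hf.comp e.differentiable.differentiableOn (mapsTo_preimage e U)))
    (e'.injective.comp_injOn (hinj.comp e.injective.injOn (mapsTo_preimage e U))) ha ?_
  simpa using (e'.hasFDerivAt.comp t (hfe.comp t e.hasFDerivAt)).hasDerivAt.deriv

end OneVariable

section ZeroSets

theorem exists_mem_eq_zero_of_forall_frontier_norm_lt {E : Type*} [NormedAddCommGroup E]
    [NormedSpace ℂ E] [FiniteDimensional ℂ E] [Nontrivial E] {f : E → ℂ} {U : Set E} {c : E}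
    (hb : IsBounded U) (hf : DiffContOnCl ℂ f U) (hc : c ∈ U)
    (hlt : ∀ z ∈ frontier U, ‖f c‖ < ‖f z‖) : ∃ z ∈ U, f z = 0 := by
  by_contra! hne
  have hne' : ∀ z ∈ closure U, f z ≠ 0 := fun z hz => by
    rw [closure_eq_self_union_frontier] at hz
    exact hz.elim (hne z) fun hz => norm_pos_iff.1 ((norm_nonneg _).trans_lt (hlt z hz))
  obtain ⟨z, hz, hmax⟩ := Complex.exists_mem_frontier_isMaxOn_norm hb ⟨c, hc⟩ (hf.inv hne')
  have hle : ‖f c‖⁻¹ ≤ ‖f z‖⁻¹ := by simpa using hmax (subset_closure hc)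
  exact (hlt z hz).not_ge ((inv_le_inv₀ (norm_pos_iff.2 (hne c hc))
    ((norm_nonneg _).trans_lt (hlt z hz))).1 hle)

theorem eventually_exists_mem_ball_eq_zero {X : Type*} [TopologicalSpace X] {H : X → ℂ → ℂ}
    {x₀ : X} {c : ℂ} {r : ℝ} (hr : 0 < r)
    (hd : ∀ᶠ x in 𝓝 x₀, DiffContOnCl ℂ (H x) (ball c r))
    (hcont : ∀ ζ ∈ closedBall c r, ContinuousAt (Function.uncurry H) (x₀, ζ))
    (hzero : H x₀ c = 0) (hne : ∀ ζ ∈ sphere c r, H x₀ ζ ≠ 0) :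
    ∀ᶠ x in 𝓝 x₀, ∃ ζ ∈ ball c r, H x ζ = 0 := by
  have hcenter : ContinuousAt (fun x => H x c) x₀ :=
    (hcont c (mem_closedBall_self hr.le)).comp₂ continuousAt_id continuousAt_const
  have hlt : ∀ᶠ x in 𝓝 x₀, ∀ ζ ∈ sphere c r, ‖H x c‖ < ‖H x ζ‖ := by
    refine (isCompact_sphere c r).eventually_forall_of_forall_eventually fun ζ hζ => ?_
    refine ContinuousAt.eventually_lt (f := fun p : X × ℂ => ‖H p.1 c‖)
      hcenter.fst'.norm (hcont ζ (sphere_subset_closedBall hζ)).norm ?_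
    simpa [hzero] using hne ζ hζ
  filter_upwards [hd, hlt] with x hdx hltx
  refine exists_mem_eq_zero_of_forall_frontier_norm_lt isBounded_ball hdx (mem_ball_self hr) ?_
  rwa [frontier_ball c hr.ne']

theorem eventually_map_add_smul_ne_of_hasStrictFDerivAt {𝕜 E F : Type*}
    [NontriviallyNormedField 𝕜] [NormedAddCommGroup E] [NormedSpace 𝕜 E] [NormedAddCommGroup F]
    [NormedSpace 𝕜 F] {k : E → F} {k' : E →L[𝕜] F} {p v : E} (hk : HasStrictFDerivAt k k' p)
    (hv : k' v ≠ 0) :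
    ∀ᶠ q : 𝕜 × E in 𝓝[≠] 0 ×ˢ 𝓝 p, k (q.2 + q.1 • v) ≠ k q.2 := by
  filter_upwards [(tendsto_differenceQuotient_of_hasStrictFDerivAt hk v).eventually_ne hv]
    with q hq heq
  exact hq (by rw [heq, sub_self, smul_zero])

variable {E : Type*} [NormedAddCommGroup E] [NormedSpace ℂ E] {U : Set E} {h k : E → ℂ} {p : E}

-- On each complex line in a direction transverse to `{k = 0}`, `k` has at most one zero near `p`,
-- while `h` keeps at least one by Hurwitz; as zeros of `h` are zeros of `k`, the two coincide.
theorem eventually_eq_zero_of_fderiv_ne_zero (hU : IsOpen U) (hh : DifferentiableOn ℂ h U)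
    (hk : DifferentiableOn ℂ k U) (hp : p ∈ U) (hhp : h p = 0) (hkp : fderiv ℂ k p ≠ 0)
    (hhk : ∀ x ∈ U, h x = 0 → k x = 0) : ∀ᶠ x in 𝓝 p, k x = 0 → h x = 0 := by
  obtain ⟨v, hv⟩ := ContinuousLinearMap.exists_ne_zero hkp
  obtain ⟨A, hA, B, hB, hAB⟩ := eventually_prod_iff.1
    (eventually_map_add_smul_ne_of_hasStrictFDerivAt
      (hasStrictFDerivAt_of_differentiableOn hU hk hp) hv)
  have hline : ∀ᶠ t : ℂ in 𝓝 0, p + t • v ∈ U :=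
    ContinuousAt.eventually_mem (by fun_prop) (by simpa using hU.mem_nhds hp)
  obtain ⟨r, hr, hball⟩ := Metric.nhds_basis_closedBall.mem_iff.1
    ((eventually_nhdsWithin_iff.1 hA).and hline)
  have hkne : ∀ x, B x → ∀ t ∈ closedBall (0 : ℂ) r, t ≠ 0 → k (x + t • v) ≠ k x :=
    fun x hx t ht ht0 => hAB ((hball ht).1 ht0) hx
  have hstay : ∀ᶠ x in 𝓝 p, ∀ t ∈ closedBall (0 : ℂ) r, x + t • v ∈ U :=
    (isCompact_closedBall 0 r).eventually_forall_of_forall_eventually fun t ht =>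
      ContinuousAt.eventually_mem (f := fun q : E × ℂ => q.1 + q.2 • v) (by fun_prop)
        (hU.mem_nhds (hball ht).2)
  have hzero : ∀ᶠ x in 𝓝 p, ∃ t ∈ ball (0 : ℂ) r, h (x + t • v) = 0 := by
    refine eventually_exists_mem_ball_eq_zero (H := fun x t => h (x + t • v)) hr ?_
      (fun t ht => ?_) (by simpa using hhp) fun t ht h0 => ?_
    · filter_upwards [hstay] with x hx
      exact (hh.comp (t := U) (s := closedBall 0 r) (f := fun t : ℂ => x + t • v) (by fun_prop)
        hx).diffContOnCl_ball Subset.rfl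
    · exact ContinuousAt.comp (f := fun q : E × ℂ => q.1 + q.2 • v)
        (hh.continuousOn.continuousAt (hU.mem_nhds (hball ht).2)) (by fun_prop)
    · refine hkne p hB.self_of_nhds t (sphere_subset_closedBall ht)
        (ne_of_mem_sphere ht hr.ne') ?_
      rw [hhk _ (hball (sphere_subset_closedBall ht)).2 h0, hhk p hp hhp]
  filter_upwards [hzero, hstay, hB] with x hx hxU hBx hkx
  obtain ⟨t, ht, hht⟩ := hx
  have ht' := ball_subset_closedBall ht
  obtain rfl : t = 0 := by
    by_contra ht0
    exact hkne x hBx t ht' ht0 (by rw [hhk _ (hxU t ht') hht, hkx])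
  simpa using hht

theorem eventually_eq_zero_of_iteratedDeriv_line_eq_zero (hU : IsOpen U)
    (hh : DifferentiableOn ℂ h U) (hp : p ∈ U)
    (h0 : ∀ v m, iteratedDeriv m (fun t : ℂ => h (p + t • v)) 0 = 0) :
    ∀ᶠ x in 𝓝 p, h x = 0 := by
  obtain ⟨r, hr, hball⟩ := Metric.isOpen_iff.1 hU p hp
  filter_upwards [ball_mem_nhds p (half_pos hr)] with x hx
  have hline : MapsTo (fun t : ℂ => p + t • (x - p)) (ball 0 2) U := fun t ht => hball <| by
    rw [mem_ball_zero_iff] at ht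
    rw [mem_ball_iff_norm] at hx ⊢
    rw [add_sub_cancel_left, norm_smul]
    nlinarith [norm_nonneg t, norm_nonneg (x - p)]
  have htaylor := Complex.taylorSeries_eq_on_ball (hh.comp (by fun_prop) hline)
    (z := 1) (by simp)
  simpa [Function.comp_def, h0] using htaylor.symm

-- Otherwise the functions vanishing wherever `h` does are stable under directional derivatives,
-- so that all Taylor coefficients of `h` at `p` vanish.
theorem exists_fderiv_ne_zero_of_not_eventually_eq_zero [LocallyCompactSpace E] (hU : IsOpen U)
    (hh : DifferentiableOn ℂ h U) (hp : p ∈ U) (hhp : h p = 0)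
    (hne : ¬∀ᶠ x in 𝓝 p, h x = 0) :
    ∃ k : E → ℂ, DifferentiableOn ℂ k U ∧ (∀ x ∈ U, h x = 0 → k x = 0) ∧
      ∃ q ∈ U, h q = 0 ∧ fderiv ℂ k q ≠ 0 := by
  by_contra! hstable
  have hiter : ∀ (v : E) (m : ℕ) (k : E → ℂ), DifferentiableOn ℂ k U →
      (∀ x ∈ U, h x = 0 → k x = 0) → iteratedDeriv m (fun t : ℂ => k (p + t • v)) 0 = 0 := by
    intro v m
    induction m with
    | zero => exact fun k _ hhk => by simpa using hhk p hp hhp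
    | succ m ih =>
      intro k hk hhk
      have hderiv : deriv (fun t : ℂ => k (p + t • v)) =ᶠ[𝓝 0]
          fun t => fderiv ℂ k (p + t • v) v := by
        have hline : ∀ᶠ t : ℂ in 𝓝 0, p + t • v ∈ U :=
          ContinuousAt.eventually_mem (by fun_prop) (by simpa using hU.mem_nhds hp)
        filter_upwards [hline] with t ht
        have hvt : HasDerivAt (fun t : ℂ => p + t • v) v t := by
          simpa using ((hasDerivAt_id t).smul_const v).const_add p
        exact ((hk.differentiableAt (hU.mem_nhds ht)).hasFDerivAt.comp_hasDerivAt t hvt).deriv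
      rw [iteratedDeriv_succ', hderiv.iteratedDeriv_eq m]
      exact ih (fun x => fderiv ℂ k x v) (differentiableOn_fderiv_apply hU hk v)
        fun x hx hx0 => by rw [hstable k hk hhk x hx hx0, zero_apply]
  exact hne (eventually_eq_zero_of_iteratedDeriv_line_eq_zero hU hh hp
    fun v m => hiter v m h hh fun _ _ => id)

end ZeroSets

section LevelSet

theorem exists_levelSet_parametrization {𝕜 E F : Type*} [RCLike 𝕜] [NormedAddCommGroup E]
    [NormedSpace 𝕜 E] [CompleteSpace E] [NormedAddCommGroup F] [NormedSpace 𝕜 F]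
    [CompleteSpace F] {φ : E → F} {φ' : E →L[𝕜] F} {a : E} {s : Set E}
    (hφ : ContDiffAt 𝕜 1 φ a) (hφ' : HasFDerivAt φ φ' a) (hsurj : φ'.range = ⊤)
    (hker : φ'.ker.ClosedComplemented) (hs : s ∈ 𝓝 a) :
    ∃ (V : Set φ'.ker) (ψ : φ'.ker → E), IsOpen V ∧ 0 ∈ V ∧ DifferentiableOn 𝕜 ψ V ∧
      InjOn ψ V ∧ MapsTo ψ V (s ∩ φ ⁻¹' {φ a}) ∧ ψ 0 = a ∧ HasFDerivAt ψ φ'.ker.subtypeL 0 := by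
  have hstrict := hφ.hasStrictFDerivAt' hφ' one_ne_zero
  let I := hstrict.implicitFunctionDataOfComplemented φ φ' hsurj hker
  let ψ := hstrict.implicitFunctionOfComplemented φ φ' hsurj hker (φ a)
  have hψ0 : ψ 0 = a := hstrict.implicitFunctionOfComplemented_apply_image hsurj hker
  have hψ' : HasFDerivAt ψ φ'.ker.subtypeL 0 :=
    (hstrict.to_implicitFunctionOfComplemented hsurj hker).hasFDerivAt
  have hpt : I.prodFun I.pt = (φ a, 0) := by simp [I, ImplicitFunctionData.prodFun]
  have hslice : Tendsto (fun w : φ'.ker => (φ a, w)) (𝓝 0) (𝓝 (I.prodFun I.pt)) :=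
    Continuous.tendsto' (by fun_prop) _ _ hpt.symm
  have hright : ContDiffAt 𝕜 1 I.rightFun I.pt :=
    (ContinuousLinearMap.contDiff _).contDiffAt.comp a (contDiffAt_id.sub contDiffAt_const)
  have hdiff : ∀ᶠ w in 𝓝 (0 : φ'.ker), DifferentiableAt 𝕜 ψ w := by
    filter_upwards [hslice.eventually ((I.contDiffAt_implicitFunction hφ hright
      one_ne_zero).eventually (by simp))] with w hw
    exact (hw.differentiableAt one_ne_zero).comp w
      (differentiableAt_const (φ a) |>.prodMk differentiableAt_id)
  have hinv : ∀ᶠ w in 𝓝 (0 : φ'.ker), I.prodFun (ψ w) = (φ a, w) :=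
    hslice.eventually I.prodFun_implicitFunction
  have hmem : ∀ᶠ w in 𝓝 (0 : φ'.ker), ψ w ∈ s :=
    hψ'.continuousAt.eventually_mem (hψ0.symm ▸ hs)
  obtain ⟨V, hV, hVo, hV0⟩ := _root_.mem_nhds_iff.1 (hdiff.and (hinv.and hmem))
  refine ⟨V, ψ, hVo, hV0, fun w hw => (hV hw).1.differentiableWithinAt, fun w hw w' hw' h => ?_,
    fun w hw => ⟨(hV hw).2.2, congrArg Prod.fst (hV hw).2.1⟩, hψ0, hψ'⟩
  exact congrArg Prod.snd ((hV hw).2.1.symm.trans ((congrArg I.prodFun h).trans (hV hw').2.1))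

end LevelSet

section Osgood

theorem finrank_ker_add_one_of_ne_zero {𝕜 E : Type*} [NontriviallyNormedField 𝕜]
    [NormedAddCommGroup E] [NormedSpace 𝕜 E] [FiniteDimensional 𝕜 E] {φ : E →L[𝕜] 𝕜}
    (hφ : φ ≠ 0) : Module.finrank 𝕜 φ.ker + 1 = Module.finrank 𝕜 E :=
  Module.Dual.finrank_ker_add_one_of_ne_zero (f := (φ : E →ₗ[𝕜] 𝕜))
    (ContinuousLinearMap.coe_injective.ne hφ)

theorem exists_injOn_ker_of_injOn {E F : Type*} [NormedAddCommGroup E] [NormedSpace ℂ E]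
    [CompleteSpace E] [NormedAddCommGroup F] [NormedSpace ℂ F] {U : Set E} {f : E → F} {a : E}
    {φ : F →L[ℂ] ℂ} (hU : IsOpen U) (hf : DifferentiableOn ℂ f U) (hinj : InjOn f U)
    (ha : a ∈ U) (hφ : φ ∘L fderiv ℂ f a ≠ 0) :
    ∃ (V : Set (φ ∘L fderiv ℂ f a).ker) (g : (φ ∘L fderiv ℂ f a).ker → φ.ker),
      IsOpen V ∧ 0 ∈ V ∧ DifferentiableOn ℂ g V ∧ InjOn g V ∧
        ∀ w, (fderiv ℂ g 0 w : F) = fderiv ℂ f a w := by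
  have hfa := (hf.differentiableAt (hU.mem_nhds ha)).hasFDerivAt
  obtain ⟨V, ψ, hVo, hV0, hψ, hψinj, hψmaps, hψ0, hψ'⟩ :=
    exists_levelSet_parametrization (φ := φ ∘ f) (φ' := φ ∘L fderiv ℂ f a)
      (φ.contDiff.contDiffAt.comp a (contDiffAt_one_of_differentiableOn hU hf ha))
      (φ.hasFDerivAt.comp a hfa)
      (Module.Dual.range_eq_top_of_ne_zero (ContinuousLinearMap.coe_injective.ne hφ))
      (ContinuousLinearMap.ker_closedComplemented_of_finiteDimensional_range _) (hU.mem_nhds ha)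
  obtain ⟨P, hP⟩ := φ.ker_closedComplemented_of_finiteDimensional_range
  have hPval : ∀ y : F, φ y = 0 → (P y : F) = y := fun y hy => congrArg Subtype.val (hP ⟨y, hy⟩)
  have hg : ∀ w ∈ V, (P (f (ψ w) - f a) : F) = f (ψ w) - f a := fun w hw =>
    hPval _ (by rw [map_sub, sub_eq_zero]; exact (hψmaps hw).2)
  refine ⟨V, fun w => P (f (ψ w) - f a), hVo, hV0, ?_, fun w hw w' hw' h => ?_, fun w => ?_⟩
  · exact P.differentiable.comp_differentiableOn
      ((hf.comp hψ fun w hw => (hψmaps hw).1).sub_const _)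
  · refine hψinj hw hw' (hinj (hψmaps hw).1 (hψmaps hw').1 (sub_left_injective (b := f a) ?_))
    exact (hg w hw).symm.trans ((congrArg Subtype.val h).trans (hg w' hw'))
  · have hfψ : HasFDerivAt f (fderiv ℂ f a) (ψ 0) := hψ0.symm ▸ hfa
    have hg' := P.hasFDerivAt.comp 0 ((hfψ.comp 0 hψ').sub_const (f a))
    exact (congrArg (fun L : _ →L[ℂ] φ.ker => (L w : F)) hg'.fderiv).trans (hPval _ w.2)

theorem ne_zero_of_injOn_of_fderiv_eq_zero {E F : Type*} [NormedAddCommGroup E]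
    [NormedSpace ℂ E] [FiniteDimensional ℂ E] [NormedAddCommGroup F] [NormedSpace ℂ F]
    {U : Set E} {f : E → F} {h : E → ℂ} {a : E} (hE : 2 ≤ Module.finrank ℂ E) (hU : IsOpen U)
    (hf : DifferentiableOn ℂ f U) (hinj : InjOn f U) (hh : DifferentiableOn ℂ h U)
    (hfh : ∀ x ∈ U, h x = 0 → fderiv ℂ f x = 0) (ha : a ∈ U) : h a ≠ 0 := by
  intro h0
  have := FiniteDimensional.proper ℂ E
  have hfd : ∀ x ∈ U, h x = 0 → HasFDerivAt f (0 : E →L[ℂ] F) x := fun x hx hx0 =>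
    hfh x hx hx0 ▸ (hf.differentiableAt (hU.mem_nhds hx)).hasFDerivAt
  have hnot : ¬∀ᶠ x in 𝓝 a, h x = 0 := fun hev => by
    have : Nontrivial E := Module.nontrivial_of_finrank_pos (R := ℂ) (by omega)
    refine not_injOn_of_eventually_hasFDerivAt_zero (𝕜 := ℂ) (hU.mem_nhds ha) ?_ hinj
    filter_upwards [hev, hU.mem_nhds ha] with x hx hxU using hfd x hxU hx
  obtain ⟨k, hk, hhk, q, hq, hhq, hkq⟩ :=
    exists_fderiv_ne_zero_of_not_eventually_eq_zero hU hh ha h0 hnot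
  have hkh := eventually_eq_zero_of_fderiv_ne_zero hU hh hk hq hhq hkq hhk
  obtain ⟨V, ψ, hVo, hV0, hψ, hψinj, hψmaps, -, -⟩ :=
    exists_levelSet_parametrization (contDiffAt_one_of_differentiableOn hU hk hq)
      (hk.differentiableAt (hU.mem_nhds hq)).hasFDerivAt
      (Module.Dual.range_eq_top_of_ne_zero (ContinuousLinearMap.coe_injective.ne hkq))
      (ContinuousLinearMap.ker_closedComplemented_of_finiteDimensional_range _)
      (inter_mem (hU.mem_nhds hq) hkh)
  have hker := finrank_ker_add_one_of_ne_zero hkq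
  have : Nontrivial (fderiv ℂ k q).ker := Module.nontrivial_of_finrank_pos (R := ℂ) (by omega)
  refine not_injOn_of_eventually_hasFDerivAt_zero (𝕜 := ℂ) (hVo.mem_nhds hV0) ?_
    (hinj.comp hψinj fun w hw => (hψmaps hw).1.1)
  filter_upwards [hVo.mem_nhds hV0] with w hw
  obtain ⟨⟨hwU, hwh⟩, hwk⟩ := hψmaps hw
  simpa using (hfd _ hwU (hwh (hwk.trans (hhk q hq hhq)))).comp w
    (hψ.differentiableAt (hVo.mem_nhds hw)).hasFDerivAt

theorem differentiableOn_det {𝕜 X E : Type*} [NontriviallyNormedField 𝕜] [NormedAddCommGroup X]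
    [NormedSpace 𝕜 X] [NormedAddCommGroup E] [NormedSpace 𝕜 E] [CompleteSpace 𝕜]
    [FiniteDimensional 𝕜 E] {A : X → E →ₗ[𝕜] E} {s : Set X}
    (hA : ∀ v, DifferentiableOn 𝕜 (fun x => A x v) s) :
    DifferentiableOn 𝕜 (fun x => LinearMap.det (A x)) s := by
  let b := Module.finBasis 𝕜 E
  simp only [← LinearMap.det_toMatrix b, Matrix.det_apply, LinearMap.toMatrix_apply]
  refine DifferentiableOn.fun_sum fun σ _ => DifferentiableOn.const_smul (fun x hx => ?_) _
  exact (HasFDerivWithinAt.finsetProd fun i _ => ((b.coord (σ i)).toContinuousLinearMap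
    |>.differentiableAt.comp_differentiableWithinAt x (hA (b i) x hx)).hasFDerivWithinAt)
      |>.differentiableWithinAt

theorem fderiv_ne_zero_of_injOn_of_two_le_finrank {E F : Type*} [NormedAddCommGroup E]
    [NormedSpace ℂ E] [FiniteDimensional ℂ E] [NormedAddCommGroup F] [NormedSpace ℂ F]
    [FiniteDimensional ℂ F] (hE : 2 ≤ Module.finrank ℂ E)
    (hEF : Module.finrank ℂ E = Module.finrank ℂ F) {U : Set E} {f : E → F} (hU : IsOpen U)
    (hf : DifferentiableOn ℂ f U) (hinj : InjOn f U)
    (hdich : ∀ x ∈ U, fderiv ℂ f x ≠ 0 → Function.Injective (fderiv ℂ f x)) {a : E}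
    (ha : a ∈ U) : fderiv ℂ f a ≠ 0 := by
  have := FiniteDimensional.proper ℂ E
  let e : F ≃L[ℂ] E := ContinuousLinearEquiv.ofFinrankEq hEF.symm
  let A : E → E →ₗ[ℂ] E := fun x => (e ∘L fderiv ℂ f x : E →L[ℂ] E)
  have hdet : DifferentiableOn ℂ (fun x => LinearMap.det (A x)) U := differentiableOn_det fun v =>
    e.differentiable.comp_differentiableOn (differentiableOn_fderiv_apply hU hf v)
  have hker : ∀ x ∈ U, LinearMap.det (A x) = 0 → fderiv ℂ f x = 0 := fun x hx h0 => by
    by_contra hne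
    exact (LinearMap.bot_lt_ker_of_det_eq_zero h0).ne'
      (LinearMap.ker_eq_bot.2 (e.injective.comp (hdich x hx hne)))
  intro hfa
  have : Nontrivial E := Module.nontrivial_of_finrank_pos (R := ℂ) (by omega)
  refine ne_zero_of_injOn_of_fderiv_eq_zero hE hU hf hinj hdet hker ha ?_
  simp [A, hfa]

theorem injective_fderiv_of_injOn {E F : Type*} [NormedAddCommGroup E] [NormedSpace ℂ E]
    [FiniteDimensional ℂ E] [NormedAddCommGroup F] [NormedSpace ℂ F] [FiniteDimensional ℂ F]
    (hEF : Module.finrank ℂ E = Module.finrank ℂ F) {U : Set E} {f : E → F} (hU : IsOpen U)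
    (hf : DifferentiableOn ℂ f U) (hinj : InjOn f U) {a : E} (ha : a ∈ U) :
    Function.Injective (fderiv ℂ f a) := by
  induction hn : Module.finrank ℂ E generalizing E F with
  | zero =>
    have := Module.finrank_zero_iff.1 hn
    exact Function.injective_of_subsingleton _
  | succ n ih =>
    have hdich : ∀ x ∈ U, fderiv ℂ f x ≠ 0 → Function.Injective (fderiv ℂ f x) := by
      intro x hx hne
      obtain ⟨u, hu⟩ := ContinuousLinearMap.exists_ne_zero hne
      obtain ⟨φ, hφu⟩ := SeparatingDual.exists_ne_zero (R := ℂ) hu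
      have hφ : φ ≠ 0 := fun h => hφu (by rw [h, zero_apply])
      have hφf : φ ∘L fderiv ℂ f x ≠ 0 := fun h => hφu (DFunLike.congr_fun h u)
      obtain ⟨V, g, hV, h0, hg, hginj, hgf⟩ := exists_injOn_ker_of_injOn hU hf hinj hx hφf
      have hkerE := finrank_ker_add_one_of_ne_zero hφf
      have hkerF := finrank_ker_add_one_of_ne_zero hφ
      refine (injective_iff_map_eq_zero _).2 fun v hv => ?_
      have hvker : v ∈ (φ ∘L fderiv ℂ f x).ker := by simp [hv]
      refine congrArg Subtype.val (?_ : (⟨v, hvker⟩ : (φ ∘L fderiv ℂ f x).ker) = 0)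
      refine (injective_iff_map_eq_zero _).1 (ih (by omega) hV hg hginj h0 (by omega)) _ ?_
      exact Subtype.ext ((hgf _).trans hv)
    refine hdich a ha ?_
    rcases n.eq_zero_or_pos with rfl | hpos
    · exact fderiv_ne_zero_of_injOn_of_finrank_eq_one hn (hEF ▸ hn) hU hf hinj ha
    · exact fderiv_ne_zero_of_injOn_of_two_le_finrank (by omega) hEF hU hf hinj hdich ha

theorem differentiableOn_invFunOn {E F : Type*} [NormedAddCommGroup E] [NormedSpace ℂ E]
    [FiniteDimensional ℂ E] [NormedAddCommGroup F] [NormedSpace ℂ F] [FiniteDimensional ℂ F]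
    (hEF : Module.finrank ℂ E = Module.finrank ℂ F) {U : Set E} {f : E → F} (hU : IsOpen U)
    (hf : DifferentiableOn ℂ f U) (hinj : InjOn f U) :
    DifferentiableOn ℂ (Function.invFunOn f U) (f '' U) := by
  rintro _ ⟨x, hx, rfl⟩
  let e : E ≃L[ℂ] F := (LinearEquiv.ofInjectiveOfFinrankEq (fderiv ℂ f x : E →ₗ[ℂ] F)
    (injective_fderiv_of_injOn hEF hU hf hinj hx) hEF).toContinuousLinearEquiv
  have he : HasStrictFDerivAt f (e : E →L[ℂ] F) x :=
    hasStrictFDerivAt_of_differentiableOn hU hf hx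
  exact (he.to_local_left_inverse (eventually_of_mem (hU.mem_nhds hx) fun y hy =>
    hinj.leftInvOn_invFunOn hy)).hasFDerivAt.differentiableAt.differentiableWithinAt

end Osgood

section SqueezingFunction

theorem subset_sub'_one {E : Type*} [TopologicalSpace E] [MulAction ℂ E] [ContinuousSMul ℂ E]
    {Ω : Set E} (hΩ : IsOpen Ω) : Ω ⊆ sub' Ω 1 := by
  intro y hy
  have hcont : ContinuousAt (fun t : ℝ => (t : ℂ)⁻¹ • y) 1 :=
    (Complex.continuous_ofReal.continuousAt.inv₀ (by simp)).smul continuousAt_const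
  have hmem : ∀ᶠ t : ℝ in 𝓝 1, (t : ℂ)⁻¹ • y ∈ Ω :=
    hcont.eventually_mem (by simpa using hΩ.mem_nhds hy)
  obtain ⟨t, ⟨ht, ht0⟩, ht1⟩ := (((hmem.and (lt_mem_nhds one_pos)).filter_mono
    nhdsWithin_le_nhds).and (self_mem_nhdsWithin (s := Iio 1))).exists
  have hbdd : BddBelow {t : ℝ | 0 < t ∧ (t : ℂ)⁻¹ • y ∈ Ω} := ⟨0, fun _ hs => hs.1.le⟩
  exact (csInf_le hbdd ⟨ht0, ht⟩).trans_lt ht1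

theorem stmt14_general {E : Type*} [NormedAddCommGroup E] [NormedSpace ℂ E]
    [FiniteDimensional ℂ E] {D Ω : Set E} (hD : IsOpen D) (hΩ : IsOpen Ω) {z : E} {f : E → E}
    (hf : DifferentiableOn ℂ f D) (hfi : InjOn f D) (hfm : MapsTo f D Ω)
    (hext : sub' Ω (gsq D Ω z) ⊆ f '' D) (h1 : gsq D Ω z = 1) :
    BijOn f D Ω ∧ ∃ g : E → E, DifferentiableOn ℂ g Ω ∧ InvOn g f D Ω := by
  have hbij : BijOn f D Ω := ⟨hfm, hfi, (subset_sub'_one hΩ).trans (h1 ▸ hext)⟩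
  refine ⟨hbij, Function.invFunOn f D, ?_, hbij.invOn_invFunOn⟩
  exact hbij.image_eq ▸ differentiableOn_invFunOn rfl hD hf hfi

end SqueezingFunction

/-- If the generalized squeezing function equals `1` at some point, witnessed by an
extremal map `f`, then `f` is a biholomorphism of `D` onto `Ω`. -/
theorem stmt14 {n : ℕ} (D Ω : Set (Fin n → ℂ))
    (hDo : IsOpen D) (hDc : IsConnected D) (hDb : IsBounded D)
    (hΩo : IsOpen Ω) (hΩc : IsConnected Ω) (hΩb : IsBounded Ω)
    (hΩcv : Convex ℝ Ω) (hΩbal : Bal Ω)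
    (z : Fin n → ℂ) (hz : z ∈ D) (f : (Fin n → ℂ) → (Fin n → ℂ))
    (hf : DifferentiableOn ℂ f D) (hfi : Set.InjOn f D) (hfm : Set.MapsTo f D Ω)
    (hfz : f z = 0) (hext : sub' Ω (gsq D Ω z) ⊆ f '' D)
    (h1 : gsq D Ω z = 1) :
    Set.BijOn f D Ω ∧ ∃ g : (Fin n → ℂ) → (Fin n → ℂ),
      DifferentiableOn ℂ g Ω ∧ Set.InvOn g f D Ω :=
  stmt14_general hDo hΩo hf hfi hfm hext h1
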